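/- Let ⟨λ₁,ν₁⟩ be a marked partition of type B of m and ⟨λ₂,ν₂⟩ a marked partition of type D of n−m, and suppose λ₁ is evenly superior to λ₂. Then ⟨λ,ν⟩ := ⟨λ₁∪λ₂, ν₁∪ν₂⟩ is a marked partition of type B of n, and d_S⟨λ,ν⟩ = d_S⟨λ₁,ν₁⟩ ∨ d_S⟨λ₂,ν₂⟩, where d_S⟨λ₁,ν₁⟩ is computed in type B and d_S⟨λ₂,ν₂⟩ in type D. -/

import Mathlib

namespace NilDual

/-- A "partition" is encoded as a multiset of natural numbers (its parts). -/
abbrev Ptn := Multiset ℕ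

/-- All parts are positive. -/
def IsPartition (l : Ptn) : Prop := ∀ a ∈ l, 0 < a

/-- `height l a` is the number of parts of `l` that are ≥ `a`. -/
def height (l : Ptn) (a : ℕ) : ℕ := Multiset.card (l.filter (fun p => a ≤ p))

/-- `psum l j` is the sum of the `j` largest parts of `l`. -/
def psum (l : Ptn) (j : ℕ) : ℕ := ∑ a ∈ Finset.Icc 1 l.sum, min j (height l a)

/-- `Dom l m` means `l ≤ m` in the dominance order. -/
def Dom (l m : Ptn) : Prop := ∀ j : ℕ, psum l j ≤ psum m j

/-- The transpose (conjugate) partition. -/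
def transpose (l : Ptn) : Ptn :=
  Multiset.filter (fun x => 0 < x)
    (Multiset.map (fun a => height l a) (Finset.Icc 1 l.sum).val)

/-- The largest part (0 for the empty partition). -/
def maxPart (l : Ptn) : ℕ := l.sup

/-- The smallest part (0 for the empty partition). -/
noncomputable def minPart (l : Ptn) : ℕ := sInf {a : ℕ | a ∈ l}

/-- `λ⁺`: add 1 to the largest part. -/
def up (l : Ptn) : Ptn := (maxPart l + 1) ::ₘ l.erase (maxPart l)

/-- `λ⁻`: subtract 1 from the smallest part, deleting it if it becomes 0. -/
noncomputable def down (l : Ptn) : Ptn :=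
  if minPart l ≤ 1 then l.erase (minPart l)
  else (minPart l - 1) ::ₘ l.erase (minPart l)

/-- The join `λ ∨ μ = (λ* ∪ μ*)*`. -/
def pjoin (l m : Ptn) : Ptn := transpose (transpose l + transpose m)

/-- `λ₋ = (λ*⁻)*`. -/
noncomputable def lowerStar (l : Ptn) : Ptn := transpose (down (transpose l))

inductive PType | B | C | D
deriving DecidableEq

/-- Parts of this parity must occur with even multiplicity in a partition of type `X`. -/
def badPart : PType → ℕ → Prop
  | PType.B, a => Even a
  | PType.C, a => Odd a
  | PType.D, a => Even a

/-- Membership in `𝒫_X` (sum unconstrained). -/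
def InP (X : PType) (l : Ptn) : Prop :=
  IsPartition l ∧ ∀ a : ℕ, badPart X a → Even (l.count a)

/-- The parity of `n` required for `𝒫_X(n)` to be defined. -/
def sumParity : PType → ℕ → Prop
  | PType.B, n => Odd n
  | PType.C, n => Even n
  | PType.D, n => Even n

/-- `m` is the X-collapse of `l`: `m ∈ 𝒫_X(|l|)`, `m ≤ l` in dominance order, and `m`
dominates every member of `𝒫_X(|l|)` that is dominated by `l`. -/
def IsCollapse (X : PType) (l m : Ptn) : Prop :=
  InP X m ∧ m.sum = l.sum ∧ Dom m l ∧
    ∀ ν : Ptn, InP X ν → ν.sum = l.sum → Dom ν l → Dom ν m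

def CollapseDefined (X : PType) (l : Ptn) : Prop := ∃ m, IsCollapse X l m

open Classical in
/-- The X-collapse `λ_X` (junk value `0` if it does not exist). -/
noncomputable def collapse (X : PType) (l : Ptn) : Ptn :=
  if h : CollapseDefined X l then h.choose else 0

/-- `l` is superior to `m`: smallest part of `l` ≥ largest part of `m`. -/
def Superior (l m : Ptn) : Prop := maxPart m ≤ minPart l

def EvenlySuperior (l m : Ptn) : Prop := ∃ k : ℕ, Even k ∧ maxPart m ≤ k ∧ k ≤ minPart l

def OddlySuperior (l m : Ptn) : Prop := ∃ k : ℕ, Odd k ∧ maxPart m ≤ k ∧ k ≤ minPart l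

/-- The parity required of marked parts in type `X`. -/
def markParity : PType → ℕ → Prop
  | PType.C, a => Even a
  | _, a => Odd a

/-- `(ν, η)` is a marked partition of type `X`, with underlying partition `λ = ν + η`. -/
def IsMarked (X : PType) (nu eta : Ptn) : Prop :=
  InP X (nu + eta) ∧ sumParity X (nu + eta).sum ∧
  (∀ a ∈ nu, nu.count a = 1 ∧ markParity X a) ∧
  ((X = PType.B ∨ X = PType.D) → Even (Multiset.card nu))

/-- The Sommers duality map `d_S` on marked partitions `(ν, η)`. -/
noncomputable def dS (X : PType) (nu eta : Ptn) : Ptn :=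
  match X with
  | PType.B => collapse PType.C (transpose (nu + collapse PType.C (down eta)))
  | PType.C => collapse PType.B (transpose (nu + collapse PType.B (up eta)))
  | PType.D =>
      collapse PType.D (transpose (nu + transpose (collapse PType.D (transpose eta))))

/-- `a` is a markable part of `l` in type `X`. -/
def Markable (X : PType) (l : Ptn) (a : ℕ) : Prop :=
  a ∈ l ∧ markParity X a ∧
    (match X with
     | PType.B => Odd (height l a)
     | PType.C => Even (height l a)
     | PType.D => Even (height l a))

/-- The marked partition `⟨l, ν⟩` is reduced. -/
def Reduced (X : PType) (l nu : Ptn) : Prop := ∀ a ∈ nu, Markable X l a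

/-- The parts entering the definition of a special marked partition:
even of odd height (B), odd of even height (C), even of even height (D). -/
def AntiPart (X : PType) (l : Ptn) (a : ℕ) : Prop :=
  match X with
  | PType.B => Even a ∧ Odd (height l a)
  | PType.C => Odd a ∧ Even (height l a)
  | PType.D => Even a ∧ Even (height l a)

/-- The reduced marked partition `⟨l, ν⟩` is special. -/
def SpecialMP (X : PType) (l nu : Ptn) : Prop :=
  ∀ a ∈ l, AntiPart X l a → Even (height nu a)

/-- `a` is the largest part of `l` whose height satisfies `P`. -/
def LargestWith (l : Ptn) (P : ℕ → Prop) (a : ℕ) : Prop :=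
  a ∈ l ∧ P (height l a) ∧ ∀ b ∈ l, P (height l b) → b ≤ a

/-- Height parity for the top marked part in a basic block. -/
def heightParity : PType → ℕ → Prop
  | PType.B => fun n => Odd n
  | _ => fun n => Even n

/-- A basic block of type `X`. -/
def BasicBlock (X : PType) (nu eta : Ptn) : Prop :=
  IsMarked X nu eta ∧
  ((∃ n1 n2 : ℕ, n1 < n2 ∧ nu = {n2, n1} ∧ n1 = minPart (nu + eta) ∧
      LargestWith (nu + eta) (heightParity X) n2) ∨
   (X = PType.C ∧ ∃ n2 : ℕ, nu = {n2} ∧ LargestWith (nu + eta) (heightParity X) n2))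

/-- An ultrabasic block: a basic block with `n₁ ≤ 1`. -/
def Ultrabasic (X : PType) (nu eta : Ptn) : Prop :=
  BasicBlock X nu eta ∧ (Multiset.card nu = 2 → minPart nu ≤ 1)

/-!
The sum of the `j` largest parts of `λ_X` is that of `λ` minus a defect in `{0, 1}`, which depends
only on the parity of that sum and on the `j`-th and `(j + 1)`-st parts. For odd `|λ|` the same
formula describes `(λ⁻)_C`, and for `λ ∈ 𝒫_D` the partition `((λ*)_D)*` is obtained from `λ` by
adding an excess in `{0, 1}` to the partial sums. If an even number separates `η₁` from `η₂`, the
defect of `η₁ ∪ η₂` agrees with that of `η₁` up to `#η₁` and from there on with one minus the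
excess of `η₂`, which yields `((η₁ ∪ η₂)⁻)_C = (η₁⁻)_C ∪ ((η₂*)_D)*`. In the outer collapse, where
transposition turns the union into a sum of rows, the type `C` defect of the sum is the type `C`
defect of the first summand plus the type `D` defect of the second.
-/

/-! ### Rows and columns of the Young diagram -/

/-- The length of the `a`-th column, counted from `0`, of the Young diagram of `l`. -/
def colLen (l : Ptn) (a : ℕ) : ℕ := height l (a + 1)

/-- The length of the `i`-th row, counted from `0`, of the Young diagram of `l`: the
`(i + 1)`-st largest part, or `0` beyond the last part. -/
noncomputable def rowLen (l : Ptn) (i : ℕ) : ℕ := sInf {a | colLen l a ≤ i}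

/-- The partition whose parts are the nonzero values among `s 0, …, s (N - 1)`. -/
def ofRows (s : ℕ → ℕ) (N : ℕ) : Ptn := ((Multiset.range N).map s).filter (0 < ·)

lemma lt_sInf_iff_of_antitone {s : ℕ → ℕ} (hs : Antitone s) {N : ℕ} (hN : s N = 0) (a i : ℕ) :
    a < sInf {b | s b ≤ i} ↔ i < s a := by
  have hmem : s (sInf {b | s b ≤ i}) ≤ i := Nat.sInf_mem (s := {b | s b ≤ i}) ⟨N, by simp [hN]⟩
  refine ⟨fun h => not_le.1 (Nat.notMem_of_lt_sInf (s := {b | s b ≤ i}) h), fun h => ?_⟩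
  by_contra! hle
  exact ((hs hle).trans hmem).not_gt h

lemma card_filter_lt_range {k N : ℕ} (h : k ≤ N) : {a ∈ Finset.range N | a < k}.card = k := by
  have : {a ∈ Finset.range N | a < k} = Finset.range k := by ext; simp; omega
  rw [this, Finset.card_range]

lemma colLen_eq_countP (l : Ptn) (a : ℕ) : colLen l a = l.countP (a < ·) :=
  (Multiset.countP_eq_card_filter ..).symm

lemma colLen_antitone (l : Ptn) : Antitone (colLen l) := fun _ _ hab =>
  Multiset.card_le_card <| Multiset.monotone_filter_right _ fun _ hp => by omega

lemma colLen_eq_zero {l : Ptn} {a : ℕ} (h : ∀ p ∈ l, p ≤ a) : colLen l a = 0 := by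
  simpa [colLen_eq_countP, Multiset.countP_eq_zero] using h

lemma colLen_eq_card {l : Ptn} {a : ℕ} (h : ∀ p ∈ l, a < p) : colLen l a = Multiset.card l := by
  rwa [colLen_eq_countP, Multiset.countP_eq_card]

lemma colLen_le_card (l : Ptn) (a : ℕ) : colLen l a ≤ Multiset.card l := by
  rw [colLen_eq_countP]; exact Multiset.countP_le_card _ _

lemma colLen_sum (l : Ptn) : colLen l l.sum = 0 :=
  colLen_eq_zero fun _ hp => Multiset.le_sum_of_mem hp

lemma colLen_add (l m : Ptn) (a : ℕ) : colLen (l + m) a = colLen l a + colLen m a := by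
  simp only [colLen_eq_countP, Multiset.countP_add]

lemma count_succ_add_colLen_succ (l : Ptn) (a : ℕ) :
    l.count (a + 1) + colLen l (a + 1) = colLen l a := by
  simp only [colLen_eq_countP]
  induction l using Multiset.induction with
  | empty => simp
  | cons x m ih =>
    simp only [Multiset.count_cons, Multiset.countP_cons]
    split_ifs <;> omega

lemma sum_range_colLen {l : Ptn} {N : ℕ} (h : l.sum ≤ N) :
    ∑ a ∈ Finset.range N, colLen l a = l.sum := by
  simp only [colLen_eq_countP]
  induction l using Multiset.induction with
  | empty => simp
  | cons x m ih =>
    rw [Multiset.sum_cons] at h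
    simp only [Multiset.countP_cons, Finset.sum_add_distrib]
    rw [ih (by omega), ← Finset.card_filter, card_filter_lt_range (by omega), Multiset.sum_cons,
      add_comm]

lemma lt_colLen_iff_lt_rowLen {l : Ptn} {a i : ℕ} : i < colLen l a ↔ a < rowLen l i :=
  (lt_sInf_iff_of_antitone (colLen_antitone l) (colLen_sum l) a i).symm

lemma rowLen_eq_of_forall_lt_iff {l : Ptn} {s : ℕ → ℕ}
    (h : ∀ a i, i < colLen l a ↔ a < s i) : rowLen l = s :=
  funext fun i => eq_of_forall_lt_iff fun a => lt_colLen_iff_lt_rowLen.symm.trans (h a i)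

lemma colLen_eq_of_forall_lt_iff {l : Ptn} {s : ℕ → ℕ}
    (h : ∀ a i, i < s a ↔ a < rowLen l i) : colLen l = s :=
  funext fun a => eq_of_forall_lt_iff fun i => lt_colLen_iff_lt_rowLen.trans (h a i).symm

lemma rowLen_antitone (l : Ptn) : Antitone (rowLen l) := fun _ _ hij =>
  le_of_forall_lt fun _ hc =>
    lt_colLen_iff_lt_rowLen.1 (hij.trans_lt (lt_colLen_iff_lt_rowLen.2 hc))

lemma rowLen_succ_le (l : Ptn) (i : ℕ) : rowLen l (i + 1) ≤ rowLen l i :=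
  rowLen_antitone l i.le_succ

lemma rowLen_le_sum (l : Ptn) (i : ℕ) : rowLen l i ≤ l.sum :=
  Nat.sInf_le ((colLen_sum l).trans_le i.zero_le)

lemma rowLen_eq_zero {l : Ptn} {i : ℕ} (h : colLen l 0 ≤ i) : rowLen l i = 0 := by
  have := (lt_colLen_iff_lt_rowLen (l := l) (a := 0) (i := i)).2
  omega

lemma IsPartition.colLen_zero {l : Ptn} (hl : IsPartition l) : colLen l 0 = Multiset.card l :=
  colLen_eq_card hl

lemma IsPartition.rowLen_pos_iff {l : Ptn} (hl : IsPartition l) {i : ℕ} :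
    0 < rowLen l i ↔ i < Multiset.card l := by
  rw [← lt_colLen_iff_lt_rowLen, hl.colLen_zero]

lemma IsPartition.count_zero {l : Ptn} (hl : IsPartition l) : l.count 0 = 0 :=
  Multiset.count_eq_zero_of_notMem fun h => (hl 0 h).false

lemma IsPartition.add {l m : Ptn} (hl : IsPartition l) (hm : IsPartition m) :
    IsPartition (l + m) := fun a ha => (Multiset.mem_add.1 ha).elim (hl a) (hm a)

lemma eq_of_colLen_eq {l m : Ptn} (hl : IsPartition l) (hm : IsPartition m)
    (h : colLen l = colLen m) : l = m := by
  ext a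
  cases a with
  | zero => rw [hl.count_zero, hm.count_zero]
  | succ a =>
    have hla := count_succ_add_colLen_succ l a
    have hma := count_succ_add_colLen_succ m a
    rw [h] at hla
    omega

lemma eq_of_rowLen_eq {l m : Ptn} (hl : IsPartition l) (hm : IsPartition m)
    (h : rowLen l = rowLen m) : l = m :=
  eq_of_colLen_eq hl hm <| colLen_eq_of_forall_lt_iff fun a i => by
    rw [lt_colLen_iff_lt_rowLen, h]

lemma isPartition_ofRows (s : ℕ → ℕ) (N : ℕ) : IsPartition (ofRows s N) := fun _ ha =>
  (Multiset.mem_filter.1 ha).2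

lemma rowLen_ofRows {s : ℕ → ℕ} (hs : Antitone s) {N : ℕ} (hN : s N = 0) :
    rowLen (ofRows s N) = s := by
  refine rowLen_eq_of_forall_lt_iff fun a i => ?_
  have hcol : colLen (ofRows s N) a = {i ∈ Finset.range N | a < s i}.card := by
    rw [colLen_eq_countP, ofRows, Multiset.countP_filter, Multiset.countP_map, Finset.card_def,
      Finset.filter_val, Finset.range_val]
    exact congrArg _ (Multiset.filter_congr fun i _ => ⟨And.left, fun h => ⟨h, by omega⟩⟩)
  simp only [hcol, ← lt_sInf_iff_of_antitone hs hN]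
  rw [card_filter_lt_range (Nat.sInf_le (by simp [hN]))]

lemma Icc_one_eq_map_range (n : ℕ) :
    Finset.Icc 1 n = (Finset.range n).map (addRightEmbedding 1) := by
  rw [Finset.range_eq_Ico, Finset.map_add_right_Ico]
  rfl

lemma transpose_eq_ofRows (l : Ptn) : transpose l = ofRows (colLen l) l.sum := by
  rw [transpose, Icc_one_eq_map_range, Finset.map_val, Multiset.map_map]
  rfl

lemma isPartition_transpose (l : Ptn) : IsPartition (transpose l) :=
  transpose_eq_ofRows l ▸ isPartition_ofRows _ _

lemma rowLen_transpose (l : Ptn) : rowLen (transpose l) = colLen l := by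
  rw [transpose_eq_ofRows, rowLen_ofRows (colLen_antitone l) (colLen_sum l)]

lemma colLen_transpose (l : Ptn) : colLen (transpose l) = rowLen l :=
  colLen_eq_of_forall_lt_iff fun a i => by rw [rowLen_transpose, lt_colLen_iff_lt_rowLen]

lemma transpose_transpose {l : Ptn} (hl : IsPartition l) : transpose (transpose l) = l :=
  eq_of_colLen_eq (isPartition_transpose _) hl <| by rw [colLen_transpose, rowLen_transpose]

/-! ### Partial sums and dominance -/

lemma psum_eq_sum_min (l : Ptn) (j : ℕ) :
    psum l j = ∑ a ∈ Finset.range l.sum, min j (colLen l a) := by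
  rw [psum, Icc_one_eq_map_range, Finset.sum_map]
  rfl

lemma psum_eq_sum_rowLen (l : Ptn) (j : ℕ) : psum l j = ∑ i ∈ Finset.range j, rowLen l i := by
  have hrow (i : ℕ) : rowLen l i = ∑ a ∈ Finset.range l.sum, if i < colLen l a then 1 else 0 := by
    simp only [lt_colLen_iff_lt_rowLen]
    rw [← Finset.card_filter, card_filter_lt_range (rowLen_le_sum l i)]
  have hcol (a : ℕ) : min j (colLen l a) =
      ∑ i ∈ Finset.range j, if i < colLen l a then 1 else 0 := by
    rw [← Finset.card_filter, ← card_filter_lt_range (min_le_left j (colLen l a))]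
    congr 1; ext; simp +contextual
  simp only [psum_eq_sum_min, hcol, hrow]
  exact Finset.sum_comm

lemma psum_zero (l : Ptn) : psum l 0 = 0 := by simp [psum_eq_sum_rowLen]

lemma psum_succ (l : Ptn) (j : ℕ) : psum l (j + 1) = psum l j + rowLen l j := by
  rw [psum_eq_sum_rowLen, psum_eq_sum_rowLen, Finset.sum_range_succ]

lemma psum_add_sum_colLen_tsub (l : Ptn) (j : ℕ) {N : ℕ} (hN : l.sum ≤ N) :
    psum l j + ∑ b ∈ Finset.range N, (colLen l b - j) = l.sum := by
  have htail : ∑ b ∈ Finset.range N, (colLen l b - j) =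
      ∑ b ∈ Finset.range l.sum, (colLen l b - j) := by
    refine (Finset.sum_subset (Finset.range_mono hN) fun b _ hb => ?_).symm
    have := colLen_antitone l (not_lt.1 (mt Finset.mem_range.2 hb))
    have := colLen_sum l
    omega
  rw [htail, psum_eq_sum_min, ← Finset.sum_add_distrib]
  conv_rhs => rw [← sum_range_colLen (le_refl l.sum)]
  exact Finset.sum_congr rfl fun b _ => by omega

lemma psum_of_colLen_zero_le {l : Ptn} {j : ℕ} (h : colLen l 0 ≤ j) : psum l j = l.sum := by
  have hvanish : ∑ b ∈ Finset.range l.sum, (colLen l b - j) = 0 :=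
    Finset.sum_eq_zero fun b _ => Nat.sub_eq_zero_of_le ((colLen_antitone l b.zero_le).trans h)
  have := psum_add_sum_colLen_tsub l j le_rfl
  omega

lemma psum_of_card_le {l : Ptn} {j : ℕ} (h : Multiset.card l ≤ j) : psum l j = l.sum :=
  psum_of_colLen_zero_le ((colLen_le_card l 0).trans h)

lemma sum_eq_of_psum_eventually_eq {l m : Ptn} {N : ℕ} (h : ∀ j, N ≤ j → psum l j = psum m j) :
    l.sum = m.sum := by
  have := h (N + Multiset.card l + Multiset.card m) (by omega)
  rwa [psum_of_card_le (by omega), psum_of_card_le (by omega)] at this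

lemma psum_transpose (l : Ptn) (j : ℕ) :
    psum (transpose l) j = ∑ a ∈ Finset.range j, colLen l a := by
  rw [psum_eq_sum_rowLen, rowLen_transpose]

lemma sum_transpose (l : Ptn) : (transpose l).sum = l.sum := by
  rw [← psum_of_card_le (le_max_left (Multiset.card (transpose l)) l.sum), psum_transpose,
    sum_range_colLen (le_max_right _ _)]

lemma eq_of_psum_eq {l m : Ptn} (hl : IsPartition l) (hm : IsPartition m)
    (h : ∀ j, psum l j = psum m j) : l = m :=
  eq_of_rowLen_eq hl hm <| funext fun i => by
    have := psum_succ l i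
    rw [h, h, psum_succ] at this
    omega

lemma exists_isPartition_psum_eq {T : ℕ → ℕ} (hzero : T 0 = 0)
    (hconcave : ∀ j, T j + T (j + 1 + 1) ≤ 2 * T (j + 1))
    {N : ℕ} (hconst : ∀ j, N ≤ j → T j = T N) :
    ∃ l : Ptn, IsPartition l ∧ ∀ j, psum l j = T j := by
  have hmono (j : ℕ) : T j ≤ T (j + 1) := by
    rcases le_total N j with hj | hj
    · rw [hconst j hj, hconst (j + 1) (by omega)]
    · induction hj using Nat.decreasingInduction with
      | self => rw [hconst (N + 1) (by omega)]
      | of_succ k _ ih =>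
        have := hconcave k
        omega
  have hanti : Antitone fun i => T (i + 1) - T i := antitone_nat_of_succ_le fun j => by
    have := hmono (j + 1)
    have := hconcave j
    omega
  have hvanish : T (N + 1) - T N = 0 := by rw [hconst (N + 1) (by omega), Nat.sub_self]
  refine ⟨ofRows (fun i => T (i + 1) - T i) N, isPartition_ofRows _ _, fun j => ?_⟩
  rw [psum_eq_sum_rowLen, rowLen_ofRows hanti hvanish,
    Finset.sum_range_tsub (monotone_nat_of_le_succ hmono), hzero, Nat.sub_zero]

lemma psum_transpose_add_psum_le (l : Ptn) (a j : ℕ) :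
    psum (transpose l) a + psum l j ≤ a * j + l.sum := by
  have hcols : ∑ b ∈ Finset.range a, colLen l b ≤
      a * j + ∑ b ∈ Finset.range (a + l.sum), (colLen l b - j) :=
    calc ∑ b ∈ Finset.range a, colLen l b
        ≤ ∑ b ∈ Finset.range a, (j + (colLen l b - j)) := Finset.sum_le_sum fun b _ => by omega
      _ = a * j + ∑ b ∈ Finset.range a, (colLen l b - j) := by simp [Finset.sum_add_distrib]
      _ ≤ _ := by
        gcongr
        omega
  have := psum_add_sum_colLen_tsub l j (Nat.le_add_left l.sum a)
  rw [psum_transpose]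
  omega

lemma psum_transpose_add_psum_colLen (l : Ptn) (a : ℕ) :
    psum (transpose l) a + psum l (colLen l a) = a * colLen l a + l.sum := by
  have hcols : ∑ b ∈ Finset.range a, colLen l b =
      a * colLen l a + ∑ b ∈ Finset.range (a + l.sum), (colLen l b - colLen l a) :=
    calc ∑ b ∈ Finset.range a, colLen l b
        = ∑ b ∈ Finset.range a, (colLen l a + (colLen l b - colLen l a)) :=
          Finset.sum_congr rfl fun b hb => by
            have := colLen_antitone l (Finset.mem_range.1 hb).le
            omega
      _ = a * colLen l a + ∑ b ∈ Finset.range a, (colLen l b - colLen l a) := by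
          simp [Finset.sum_add_distrib]
      _ = _ := congrArg _ <| Finset.sum_subset (Finset.range_mono (Nat.le_add_right a _))
          fun b _ hb => Nat.sub_eq_zero_of_le <|
            colLen_antitone l (not_lt.1 (mt Finset.mem_range.2 hb))
  have := psum_add_sum_colLen_tsub l (colLen l a) (Nat.le_add_left l.sum a)
  rw [psum_transpose]
  omega

lemma Dom.transpose {l m : Ptn} (h : Dom l m) (hsum : l.sum = m.sum) :
    Dom (transpose m) (transpose l) := fun a => by
  have hl := psum_transpose_add_psum_colLen l a
  have hm := psum_transpose_add_psum_le m a (colLen l a)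
  have := h (colLen l a)
  omega

/-! ### The collapse formula -/

/-- The shift under which the parts that need even multiplicity in type `X` become odd. -/
def parityShift : PType → ℕ
  | PType.C => 0
  | _ => 1

/-- The sum of the `j` largest parts of `l`, each increased by `parityShift X`. -/
def shiftedSum (X : PType) (l : Ptn) (j : ℕ) : ℕ := psum l j + j * parityShift X

open Classical in
/-- The amount by which the `j`-th partial sum of `l` drops under the `X`-collapse. Nothing drops
at `j = 0`, where `rowLen l (j - 1)` is a junk value, because `shiftedSum X l 0 = 0`. -/
noncomputable def defect (X : PType) (l : Ptn) (j : ℕ) : ℕ :=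
  if Odd (shiftedSum X l j) ∧ ¬(rowLen l (j - 1) = rowLen l j ∧ badPart X (rowLen l j)) then 1
  else 0

section CollapseFormula

variable {X : PType} {l m n : Ptn}

lemma badPart_iff {a : ℕ} : badPart X a ↔ Odd (a + parityShift X) := by
  cases X <;> simp [badPart, parityShift, Nat.odd_add_one]

lemma shiftedSum_zero : shiftedSum X l 0 = 0 := by simp [shiftedSum, psum_zero]

lemma shiftedSum_succ (j : ℕ) :
    shiftedSum X l (j + 1) = shiftedSum X l j + (rowLen l j + parityShift X) := by
  rw [shiftedSum, shiftedSum, psum_succ]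
  ring

lemma pos_of_odd_shiftedSum {j : ℕ} (hj : Odd (shiftedSum X l j)) : 0 < j := by
  rw [Nat.pos_iff_ne_zero]
  rintro rfl
  simp [shiftedSum_zero] at hj

lemma rowLen_eq_succ_iff {i a : ℕ} :
    rowLen l i = a + 1 ↔ colLen l (a + 1) ≤ i ∧ i < colLen l a := by
  rw [← not_lt, lt_colLen_iff_lt_rowLen, lt_colLen_iff_lt_rowLen]
  omega

lemma shiftedSum_colLen_succ_add {a r : ℕ} (h : colLen l (a + 1) + r ≤ colLen l a) :
    shiftedSum X l (colLen l (a + 1) + r) =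
      shiftedSum X l (colLen l (a + 1)) + r * (a + 1 + parityShift X) := by
  induction r with
  | zero => simp
  | succ r ih =>
    have hrow : rowLen l (colLen l (a + 1) + r) = a + 1 :=
      rowLen_eq_succ_iff.2 ⟨by omega, by omega⟩
    rw [← add_assoc, shiftedSum_succ, ih (by omega), hrow]
    ring

lemma shiftedSum_colLen (a : ℕ) :
    shiftedSum X l (colLen l a) =
      shiftedSum X l (colLen l (a + 1)) + l.count (a + 1) * (a + 1 + parityShift X) := by
  have hcount := count_succ_add_colLen_succ l a
  rw [← shiftedSum_colLen_succ_add (by omega), add_comm, hcount]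

lemma inP_iff_even_shiftedSum_colLen :
    InP X l ↔ IsPartition l ∧ ∀ a, Even (shiftedSum X l (colLen l a)) := by
  refine and_congr_right fun hl => ⟨fun hcount a => ?_, fun heven a ha => ?_⟩
  · rcases le_total l.sum a with h | h
    · have := colLen_antitone l h
      rw [colLen_sum, Nat.le_zero] at this
      simp [this, shiftedSum_zero]
    · induction h using Nat.decreasingInduction with
      | self => simp [colLen_sum, shiftedSum_zero]
      | of_succ a _ ih =>
        rw [shiftedSum_colLen]
        refine ih.add (Nat.even_mul.2 (or_iff_not_imp_right.2 fun hodd => ?_))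
        exact hcount _ (badPart_iff.2 (Nat.not_even_iff_odd.1 hodd))
  · cases a with
    | zero => simp [hl.count_zero]
    | succ a =>
      have hprod := (Nat.even_add.1 (shiftedSum_colLen (X := X) (l := l) a ▸ heven a)).1 (heven _)
      exact (Nat.even_mul.1 hprod).resolve_right (Nat.not_even_iff_odd.2 (badPart_iff.1 ha))

lemma colLen_of_rowLen_lt_rowLen_pred {j : ℕ} (h : rowLen l j < rowLen l (j - 1)) :
    colLen l (rowLen l j) = j := by
  have hlt := lt_colLen_iff_lt_rowLen.2 h
  have hge := mt lt_colLen_iff_lt_rowLen.1 (lt_irrefl (rowLen l j))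
  omega

lemma InP.rowLen_pred_eq (h : InP X l) {j : ℕ} (hj : Odd (shiftedSum X l j)) :
    rowLen l (j - 1) = rowLen l j := by
  by_contra hne
  have hcorner := colLen_of_rowLen_lt_rowLen_pred <|
    (rowLen_antitone l (Nat.sub_le j 1)).lt_of_ne' hne
  have heven := (inP_iff_even_shiftedSum_colLen.1 h).2 (rowLen l j)
  rw [hcorner] at heven
  exact Nat.not_even_iff_odd.2 hj heven

lemma badPart_zero_of_odd_shiftedSum (hs : sumParity X l.sum) {j : ℕ} (hzero : rowLen l j = 0)
    (hj : Odd (shiftedSum X l j)) : badPart X 0 := by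
  cases X with
  | B => exact Even.zero
  | D => exact Even.zero
  | C =>
    have hle : colLen l 0 ≤ j := not_lt.1 fun h => by
      have := lt_colLen_iff_lt_rowLen.1 h
      omega
    rw [shiftedSum, psum_of_colLen_zero_le hle] at hj
    exact absurd hs (Nat.not_even_iff_odd.2 (by simpa [parityShift] using hj))

lemma InP.badPart_rowLen (h : InP X l) (hs : sumParity X l.sum) {j : ℕ}
    (hj : Odd (shiftedSum X l j)) : badPart X (rowLen l j) := by
  rcases hrow : rowLen l j with _ | a
  · exact badPart_zero_of_odd_shiftedSum hs hrow hj
  · obtain ⟨hle, hlt⟩ := rowLen_eq_succ_iff.1 hrow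
    obtain ⟨r, rfl⟩ := Nat.exists_eq_add_of_le hle
    rw [shiftedSum_colLen_succ_add hlt.le] at hj
    have heven := (inP_iff_even_shiftedSum_colLen.1 h).2 (a + 1)
    exact badPart_iff.2 (Nat.odd_mul.1 ((Nat.odd_add'.1 hj).2 heven)).2

lemma defect_le_one (j : ℕ) : defect X l j ≤ 1 := by
  unfold defect
  split_ifs <;> omega

lemma defect_zero : defect X l 0 = 0 := by simp [defect, shiftedSum_zero]

lemma defect_eq_zero_of_colLen_zero_lt (hs : sumParity X l.sum) {j : ℕ} (hj : colLen l 0 < j) :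
    defect X l j = 0 := by
  have hrow : rowLen l j = 0 := rowLen_eq_zero hj.le
  have hprev : rowLen l (j - 1) = 0 := rowLen_eq_zero (by omega)
  refine if_neg fun ⟨hodd, hdrop⟩ => hdrop ?_
  rw [hprev, hrow]
  exact ⟨rfl, badPart_zero_of_odd_shiftedSum hs hrow hodd⟩

lemma defect_le_psum (j : ℕ) : defect X l j ≤ psum l j := by
  cases j with
  | zero => simp [defect_zero]
  | succ j =>
    rcases Nat.eq_zero_or_pos (psum l (j + 1)) with hzero | hpos
    · have hrow : rowLen l j = 0 := by
        have := psum_succ l j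
        omega
      have hnext : rowLen l (j + 1) = 0 :=
        Nat.le_zero.1 (hrow ▸ rowLen_succ_le l j)
      rw [hzero, Nat.le_zero]
      refine if_neg fun ⟨hodd, hdrop⟩ => hdrop ?_
      rw [shiftedSum, hzero, zero_add] at hodd
      rw [Nat.add_sub_cancel, hrow, hnext, badPart_iff, zero_add]
      exact ⟨rfl, (Nat.odd_mul.1 hodd).2⟩
    · exact (defect_le_one _).trans hpos

lemma two_mul_defect_succ_add_rowLen_succ_le (j : ℕ) :
    2 * defect X l (j + 1) + rowLen l (j + 1) ≤
      rowLen l j + defect X l j + defect X l (j + 1 + 1) := by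
  have := rowLen_succ_le l j
  have := shiftedSum_succ (X := X) (l := l) j
  have := shiftedSum_succ (X := X) (l := l) (j + 1)
  simp only [defect, badPart_iff, Nat.odd_iff, Nat.add_sub_cancel]
  split_ifs <;> omega

lemma exists_psum_add_defect_eq (hs : sumParity X l.sum) :
    ∃ m : Ptn, IsPartition m ∧ ∀ j, psum m j + defect X l j = psum l j := by
  obtain ⟨m, hm, hpsum⟩ := exists_isPartition_psum_eq (T := fun j => psum l j - defect X l j)
    (N := colLen l 0 + 1) (by simp [psum_zero])
    (fun j => by
      have := defect_le_psum (X := X) (l := l) j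
      have := defect_le_psum (X := X) (l := l) (j + 1)
      have := defect_le_psum (X := X) (l := l) (j + 1 + 1)
      have := two_mul_defect_succ_add_rowLen_succ_le (X := X) (l := l) j
      simp only [psum_succ] at *
      omega)
    (fun j hj => by
      rw [defect_eq_zero_of_colLen_zero_lt hs hj, defect_eq_zero_of_colLen_zero_lt hs (by omega),
        psum_of_colLen_zero_le (by omega), psum_of_colLen_zero_le (by omega)])
  refine ⟨m, hm, fun j => ?_⟩
  rw [hpsum, Nat.sub_add_cancel (defect_le_psum j)]

lemma inP_of_psum_add_defect_eq (hm : IsPartition m)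
    (h : ∀ j, psum m j + defect X l j = psum l j) : InP X m := by
  have hrow {j : ℕ} (hj : Odd (shiftedSum X m j)) : rowLen m (j - 1) = rowLen m j := by
    obtain ⟨j, rfl⟩ := Nat.exists_eq_add_one.2 (pos_of_odd_shiftedSum hj)
    have := h j
    have := h (j + 1)
    have := h (j + 1 + 1)
    have := shiftedSum_succ (X := X) (l := l) j
    have := shiftedSum_succ (X := X) (l := l) (j + 1)
    have : shiftedSum X m (j + 1) + defect X l (j + 1) = shiftedSum X l (j + 1) := by
      rw [shiftedSum, shiftedSum, ← h]
      ring
    simp only [defect, psum_succ, badPart_iff, Nat.odd_iff, Nat.add_sub_cancel] at *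
    split_ifs at * <;> omega
  refine inP_iff_even_shiftedSum_colLen.2 ⟨hm, fun a => ?_⟩
  by_contra hodd
  rw [Nat.not_even_iff_odd] at hodd
  have hpos := pos_of_odd_shiftedSum hodd
  have hlast : a < rowLen m (colLen m a - 1) := lt_colLen_iff_lt_rowLen.1 (by omega)
  rw [hrow hodd, ← lt_colLen_iff_lt_rowLen] at hlast
  exact lt_irrefl _ hlast

-- If `n` attains the partial sum of `l` at a place where `l` drops, then its two equal rows there
-- are squeezed onto those of `l`, which contradicts the drop.
lemma psum_add_defect_le_of_dom (hn : InP X n) (hs : sumParity X n.sum) (hdom : Dom n l) (j : ℕ) :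
    psum n j + defect X l j ≤ psum l j := by
  by_contra! hlt
  have hpsum : psum n j = psum l j := by
    have := hdom j
    have := defect_le_one (X := X) (l := l) j
    omega
  have hshifted : shiftedSum X n j = shiftedSum X l j := by rw [shiftedSum, shiftedSum, hpsum]
  obtain ⟨hodd, hdrop⟩ : Odd (shiftedSum X l j) ∧
      ¬(rowLen l (j - 1) = rowLen l j ∧ badPart X (rowLen l j)) := by
    by_contra hno
    rw [defect, if_neg hno] at hlt
    omega
  rw [← hshifted] at hodd
  have hrow := hn.rowLen_pred_eq hodd
  have hbad := hn.badPart_rowLen hs hodd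
  obtain ⟨j, rfl⟩ := Nat.exists_eq_add_one.2 (pos_of_odd_shiftedSum hodd)
  have := hdom j
  have := hdom (j + 1 + 1)
  have := rowLen_succ_le l j
  simp only [psum_succ, Nat.add_sub_cancel] at *
  have hrow_l : rowLen l (j + 1) = rowLen n (j + 1) := by omega
  exact hdrop ⟨by omega, hrow_l ▸ hbad⟩

lemma isCollapse_of_psum_add_defect_eq (hs : sumParity X l.sum) (hm : IsPartition m)
    (h : ∀ j, psum m j + defect X l j = psum l j) : IsCollapse X l m := by
  refine ⟨inP_of_psum_add_defect_eq hm h, ?_, fun j => ?_, fun n hn hns hdom j => ?_⟩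
  · refine sum_eq_of_psum_eventually_eq (N := colLen l 0 + 1) fun j hj => ?_
    rw [← h, defect_eq_zero_of_colLen_zero_lt hs hj, add_zero]
  · exact Nat.le.intro (h j)
  · have := psum_add_defect_le_of_dom hn (hns ▸ hs) hdom j
    have := h j
    omega

lemma IsCollapse.unique {m' : Ptn} (h : IsCollapse X l m) (h' : IsCollapse X l m') : m = m' :=
  eq_of_psum_eq h.1.1 h'.1.1 fun j =>
    le_antisymm (h'.2.2.2 m h.1 h.2.1 h.2.2.1 j) (h.2.2.2 m' h'.1 h'.2.1 h'.2.2.1 j)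

lemma IsCollapse.collapse_eq (h : IsCollapse X l m) : collapse X l = m := by
  have hdef : CollapseDefined X l := ⟨m, h⟩
  rw [collapse, dif_pos hdef]
  exact hdef.choose_spec.unique h

lemma collapse_eq_of_psum_add_defect_eq (hs : sumParity X l.sum) (hm : IsPartition m)
    (h : ∀ j, psum m j + defect X l j = psum l j) : collapse X l = m :=
  (isCollapse_of_psum_add_defect_eq hs hm h).collapse_eq

lemma isCollapse_collapse (hs : sumParity X l.sum) : IsCollapse X l (collapse X l) := by
  obtain ⟨m, hm, h⟩ := exists_psum_add_defect_eq hs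
  have hcol := isCollapse_of_psum_add_defect_eq hs hm h
  rwa [hcol.collapse_eq]

lemma isPartition_collapse (hs : sumParity X l.sum) : IsPartition (collapse X l) :=
  (isCollapse_collapse hs).1.1

lemma sum_collapse (hs : sumParity X l.sum) : (collapse X l).sum = l.sum :=
  (isCollapse_collapse hs).2.1

lemma psum_collapse_add_defect (hs : sumParity X l.sum) (j : ℕ) :
    psum (collapse X l) j + defect X l j = psum l j := by
  obtain ⟨m, hm, h⟩ := exists_psum_add_defect_eq hs
  rw [collapse_eq_of_psum_add_defect_eq hs hm h, h]

end CollapseFormula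

/-! ### The transposed `D`-collapse -/

open Classical in
/-- The amount by which the `j`-th partial sum grows from `l` to `((l*)_D)*`, for `l ∈ 𝒫_D`. -/
noncomputable def excess (l : Ptn) (j : ℕ) : ℕ :=
  if 0 < j ∧ (Odd (psum l j) ∨ rowLen l (j - 1) = rowLen l j ∧ Odd (rowLen l j)) then 1 else 0

section TransposedCollapse

variable {l n : Ptn}

lemma even_count_transpose_iff (b : ℕ) :
    Even ((transpose l).count (b + 1)) ↔ (Even (psum l (b + 1 + 1)) ↔ Even (psum l b)) := by
  have hcount := count_succ_add_colLen_succ (transpose l) b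
  rw [colLen_transpose] at hcount
  simp only [psum_succ, Nat.even_iff]
  omega

lemma inP_D_transpose_iff (hs : Even l.sum) :
    InP PType.D (transpose l) ↔ ∀ j, Odd j → Even (psum l j) := by
  refine ⟨fun h j ⟨i, hi⟩ => ?_, fun h => ⟨isPartition_transpose l, fun a ha => ?_⟩⟩
  · subst hi
    rcases le_total (Multiset.card l) i with hle | hle
    · rwa [psum_of_card_le (by omega)]
    · induction hle using Nat.decreasingInduction with
      | self => rwa [psum_of_card_le (by omega)]
      | of_succ i _ ih =>
        exact ((even_count_transpose_iff _).1 (h.2 _ (by simp [badPart, parity_simps]))).1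
          (ih ⟨i + 1, rfl⟩)
  · cases a with
    | zero => simp [(isPartition_transpose l).count_zero]
    | succ b =>
      have hb : Odd b := by simpa [badPart, parity_simps] using ha
      exact (even_count_transpose_iff b).2 (iff_of_true (h _ hb.add_one.add_one) (h _ hb))

lemma excess_zero : excess l 0 = 0 := by simp [excess]

lemma excess_eq_zero_of_card_le (hs : Even l.sum) {j : ℕ} (hj : Multiset.card l ≤ j) :
    excess l j = 0 := by
  have hrow : rowLen l j = 0 := rowLen_eq_zero ((colLen_le_card l 0).trans hj)
  rw [excess, psum_of_card_le hj, hrow]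
  simp [hs]

lemma rowLen_succ_add_excess_le (j : ℕ) :
    rowLen l (j + 1) + excess l j + excess l (j + 1 + 1) ≤ rowLen l j + 2 * excess l (j + 1) := by
  have := rowLen_succ_le l j
  simp only [excess, psum_succ, Nat.odd_iff, Nat.add_sub_cancel]
  split_ifs <;> omega

lemma exists_psum_eq_add_excess (hs : Even l.sum) :
    ∃ m : Ptn, IsPartition m ∧ ∀ j, psum m j = psum l j + excess l j := by
  refine exists_isPartition_psum_eq (N := Multiset.card l) (by simp [psum_zero, excess_zero])
    (fun j => ?_) (fun j hj => ?_)
  · have := rowLen_succ_add_excess_le (l := l) j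
    simp only [psum_succ]
    omega
  · rw [excess_eq_zero_of_card_le hs hj, excess_eq_zero_of_card_le hs le_rfl,
      psum_of_card_le hj, psum_of_card_le le_rfl]

lemma InP.rowLen_eq_of_odd_psum_add (h : InP PType.D l) (hs : Even l.sum) {j : ℕ}
    (hj : Odd (psum l j + j)) : rowLen l (j - 1) = rowLen l j ∧ Even (rowLen l j) := by
  have hodd : Odd (shiftedSum PType.D l j) := by simpa [shiftedSum, parityShift] using hj
  exact ⟨h.rowLen_pred_eq hodd, h.badPart_rowLen hs hodd⟩

lemma InP.even_psum_add_excess (h : InP PType.D l) (hs : Even l.sum) {j : ℕ} (hj : Odd j) :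
    Even (psum l j + excess l j) := by
  have := h.rowLen_eq_of_odd_psum_add hs (j := j)
  simp only [excess, Nat.even_iff, Nat.odd_iff] at *
  split_ifs <;> omega

lemma InP.psum_add_excess_le (h : InP PType.D l) (hs : Even l.sum) (hdom : Dom l n)
    (hn : ∀ j, Odd j → Even (psum n j)) (j : ℕ) : psum l j + excess l j ≤ psum n j := by
  cases j with
  | zero => simp [psum_zero, excess_zero]
  | succ j =>
    have := h.rowLen_eq_of_odd_psum_add hs (j := j + 1)
    have := hdom j
    have := hdom (j + 1)
    have := hdom (j + 1 + 1)
    have := hn j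
    have := hn (j + 1)
    have := hn (j + 1 + 1)
    have := rowLen_succ_le n j
    simp only [excess, psum_succ, Nat.even_iff, Nat.odd_iff, Nat.add_sub_cancel] at *
    split_ifs <;> omega

-- Transposition reverses dominance, so the collapse of `l*` is the transpose of the least
-- partition above `l` whose partial sums at odd indices are even.
lemma InP.isCollapse_transpose {m : Ptn} (h : InP PType.D l) (hs : Even l.sum)
    (hpsum : ∀ j, psum m j = psum l j + excess l j) :
    IsCollapse PType.D (transpose l) (transpose m) := by
  have hsum : m.sum = l.sum := sum_eq_of_psum_eventually_eq (N := Multiset.card l) fun j hj => by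
    rw [hpsum, excess_eq_zero_of_card_le hs hj, add_zero]
  have hdom : Dom l m := fun j => Nat.le.intro (hpsum j).symm
  refine ⟨?_, by rw [sum_transpose, sum_transpose, hsum], hdom.transpose hsum.symm,
    fun n hn hns hdom_n => ?_⟩
  · rw [inP_D_transpose_iff (hsum ▸ hs)]
    intro j hj
    exact hpsum j ▸ h.even_psum_add_excess hs hj
  · rw [sum_transpose] at hns
    have hsum_n : (transpose n).sum = l.sum := by rw [sum_transpose, hns]
    have hodd : ∀ j, Odd j → Even (psum (transpose n) j) := by
      rwa [← inP_D_transpose_iff (hsum_n ▸ hs), transpose_transpose hn.1]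
    have hdom_l : Dom l (transpose n) := by
      simpa only [transpose_transpose h.1] using hdom_n.transpose (by rw [sum_transpose, hns])
    have hdom_m : Dom m (transpose n) := fun j =>
      hpsum j ▸ h.psum_add_excess_le hs hdom_l hodd j
    simpa only [transpose_transpose hn.1] using hdom_m.transpose (by rw [hsum, hsum_n])

lemma InP.psum_transpose_collapse_transpose (h : InP PType.D l) (hs : Even l.sum) (j : ℕ) :
    psum (transpose (collapse PType.D (transpose l))) j = psum l j + excess l j := by
  obtain ⟨m, hm, hpsum⟩ := exists_psum_eq_add_excess hs
  rw [(h.isCollapse_transpose hs hpsum).collapse_eq, transpose_transpose hm, hpsum]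

lemma sum_transpose_collapse_transpose (hs : Even l.sum) :
    (transpose (collapse PType.D (transpose l))).sum = l.sum := by
  have hs' : sumParity PType.D (transpose l).sum := (sum_transpose l).symm ▸ hs
  rw [sum_transpose, sum_collapse hs', sum_transpose]

lemma forall_mem_le_iff {k : ℕ} : (∀ a ∈ l, a ≤ k) ↔ rowLen l 0 ≤ k := by
  rw [← not_lt, ← lt_colLen_iff_lt_rowLen, not_lt, Nat.le_zero, colLen_eq_countP,
    Multiset.countP_eq_zero]
  simp

lemma InP.le_of_mem_transpose_collapse_transpose (h : InP PType.D l) (hs : Even l.sum) {k : ℕ}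
    (hk : Even k) (hl : ∀ a ∈ l, a ≤ k) :
    ∀ a ∈ transpose (collapse PType.D (transpose l)), a ≤ k := by
  rw [forall_mem_le_iff] at hl ⊢
  have hfirst := h.psum_transpose_collapse_transpose hs 1
  simp only [excess, psum_succ _ 0, psum_zero, zero_add, Nat.sub_self, Nat.odd_iff] at hfirst
  rw [Nat.even_iff] at hk
  split_ifs at hfirst <;> omega

end TransposedCollapse

/-! ### Unions of partitions one of which is superior to the other -/

section Union

variable {l m : Ptn} {k : ℕ}

lemma forall_mem_add_iff {p : ℕ → Prop} :
    (∀ a ∈ l + m, p a) ↔ (∀ a ∈ l, p a) ∧ ∀ a ∈ m, p a := by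
  simp only [Multiset.mem_add, or_imp, forall_and]

lemma rowLen_add (hl : ∀ a ∈ l, k ≤ a) (hm : ∀ a ∈ m, a ≤ k) (i : ℕ) :
    rowLen (l + m) i =
      if i < Multiset.card l then rowLen l i else rowLen m (i - Multiset.card l) := by
  refine congrFun (rowLen_eq_of_forall_lt_iff (s := fun i => if i < Multiset.card l then
    rowLen l i else rowLen m (i - Multiset.card l)) fun a i => ?_) i
  have hlow (ha : a < k) : colLen l a = Multiset.card l :=
    colLen_eq_card fun p hp => ha.trans_le (hl p hp)
  have hhigh (ha : k ≤ a) : colLen m a = 0 := colLen_eq_zero fun p hp => (hm p hp).trans ha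
  have := colLen_le_card l a
  rw [colLen_add]
  split_ifs with hi <;> rw [← lt_colLen_iff_lt_rowLen] <;> omega

lemma rowLen_add_of_lt_card (hl : ∀ a ∈ l, k ≤ a) (hm : ∀ a ∈ m, a ≤ k) {i : ℕ}
    (hi : i < Multiset.card l) : rowLen (l + m) i = rowLen l i := by
  rw [rowLen_add hl hm, if_pos hi]

lemma rowLen_add_card_add (hl : ∀ a ∈ l, k ≤ a) (hm : ∀ a ∈ m, a ≤ k) (i : ℕ) :
    rowLen (l + m) (Multiset.card l + i) = rowLen m i := by
  rw [rowLen_add hl hm, if_neg (by omega), Nat.add_sub_cancel_left]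

lemma psum_add_of_le_card (hl : ∀ a ∈ l, k ≤ a) (hm : ∀ a ∈ m, a ≤ k) {j : ℕ}
    (hj : j ≤ Multiset.card l) : psum (l + m) j = psum l j := by
  rw [psum_eq_sum_rowLen, psum_eq_sum_rowLen]
  exact Finset.sum_congr rfl fun i hi =>
    rowLen_add_of_lt_card hl hm ((Finset.mem_range.1 hi).trans_le hj)

lemma psum_add_card_add (hl : ∀ a ∈ l, k ≤ a) (hm : ∀ a ∈ m, a ≤ k) (i : ℕ) :
    psum (l + m) (Multiset.card l + i) = l.sum + psum m i := by
  rw [psum_eq_sum_rowLen, Finset.sum_range_add, ← psum_eq_sum_rowLen,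
    psum_add_of_le_card hl hm le_rfl, psum_of_card_le le_rfl, psum_eq_sum_rowLen m]
  simp only [rowLen_add_card_add hl hm]

lemma forall_le_mem_iff {p : ℕ} (hcard : Multiset.card l = p + 1) :
    (∀ a ∈ l, k ≤ a) ↔ k ≤ rowLen l p := by
  cases k with
  | zero => simp
  | succ k =>
    have hle := colLen_le_card l k
    rw [Nat.add_one_le_iff, ← lt_colLen_iff_lt_rowLen, ← Nat.add_one_le_iff, ← hcard,
      hle.ge_iff_eq', eq_comm, colLen_eq_countP, Multiset.countP_eq_card]
    rfl

end Union

/-! ### The collapse of `λ⁻` -/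

section CollapseDown

variable {l : Ptn} {k : ℕ}

lemma IsPartition.exists_eq_cons_succ (hl : IsPartition l) (h0 : l ≠ 0) :
    ∃ b l', l = (b + 1) ::ₘ l' ∧ ∀ a ∈ l', b + 1 ≤ a := by
  obtain ⟨a, ha⟩ := Multiset.exists_mem_of_ne_zero h0
  have hmem : minPart l ∈ l := Nat.sInf_mem (s := {a | a ∈ l}) ⟨a, ha⟩
  obtain ⟨b, hb⟩ := Nat.exists_eq_add_one.2 (hl _ hmem)
  refine ⟨b, l.erase (b + 1), by rw [← hb, Multiset.cons_erase hmem], fun a ha => ?_⟩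
  exact hb ▸ Nat.sInf_le (Multiset.mem_of_mem_erase ha)

lemma down_cons_succ {b : ℕ} (hl : ∀ a ∈ l, b + 1 ≤ a) :
    down ((b + 1) ::ₘ l) = if b = 0 then l else b ::ₘ l := by
  have hmin : minPart ((b + 1) ::ₘ l) = b + 1 := by
    refine IsLeast.csInf_eq ⟨Multiset.mem_cons_self _ _, fun a ha => ?_⟩
    exact (Multiset.mem_cons.1 ha).elim Eq.ge (hl a)
  simp [down, hmin]

lemma ne_zero_of_odd_sum (hs : Odd l.sum) : l ≠ 0 := by
  rintro rfl
  simp at hs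

lemma IsPartition.even_sum_down (hl : IsPartition l) (hs : Odd l.sum) : Even (down l).sum := by
  obtain ⟨b, l', rfl, hl'⟩ := hl.exists_eq_cons_succ (ne_zero_of_odd_sum hs)
  rw [down_cons_succ hl']
  simp only [Multiset.sum_cons, Nat.odd_iff] at hs
  split_ifs <;> simp only [Multiset.sum_cons, Nat.even_iff] <;> omega

lemma rowLen_cons {x : ℕ} (h : ∀ a ∈ l, x ≤ a) (i : ℕ) :
    rowLen (x ::ₘ l) i =
      if i < Multiset.card l then rowLen l i else if i = Multiset.card l then x else 0 := by
  refine congrFun (rowLen_eq_of_forall_lt_iff (s := fun i => if i < Multiset.card l then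
    rowLen l i else if i = Multiset.card l then x else 0) fun a i => ?_) i
  have hlow (ha : a < x) : colLen l a = Multiset.card l :=
    colLen_eq_card fun p hp => ha.trans_le (h p hp)
  have := colLen_le_card l a
  have := lt_colLen_iff_lt_rowLen (l := l) (a := a) (i := i)
  rw [colLen_eq_countP, Multiset.countP_cons, ← colLen_eq_countP]
  split_ifs <;> omega

lemma IsPartition.rowLen_down (hl : IsPartition l) (h0 : l ≠ 0) (i : ℕ) :
    rowLen (down l) i = if i + 1 = Multiset.card l then rowLen l i - 1 else rowLen l i := by
  obtain ⟨b, l', rfl, hl'⟩ := hl.exists_eq_cons_succ h0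
  rw [down_cons_succ hl', rowLen_cons hl', Multiset.card_cons]
  have hzero (hi : Multiset.card l' ≤ i) : rowLen l' i = 0 :=
    rowLen_eq_zero ((colLen_le_card l' 0).trans hi)
  split_ifs with hb <;> try rw [rowLen_cons fun a ha => (Nat.le_succ b).trans (hl' a ha)]
  all_goals grind

lemma IsPartition.psum_down (hl : IsPartition l) (h0 : l ≠ 0) (j : ℕ) :
    psum (down l) j + (if Multiset.card l ≤ j then 1 else 0) = psum l j := by
  induction j with
  | zero => simp [psum_zero, h0]
  | succ j ih =>
    have := Multiset.card_pos.2 h0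
    have := hl.rowLen_pos_iff (i := j)
    rw [psum_succ, psum_succ, hl.rowLen_down h0]
    split_ifs at * <;> omega

lemma shiftedSum_C (l : Ptn) (j : ℕ) : shiftedSum PType.C l j = psum l j := rfl

lemma defect_C_eq_one {j : ℕ} (hodd : Odd (psum l j)) (heven : Even (rowLen l j)) :
    defect PType.C l j = 1 :=
  if_pos ⟨hodd, fun h => Nat.not_even_iff_odd.2 h.2 heven⟩

lemma defect_C_eq_zero {j : ℕ} (heven : Even (psum l j)) : defect PType.C l j = 0 :=
  if_neg fun h => Nat.not_even_iff_odd.2 h.1 heven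

lemma defect_C_of_card_le (hs : Odd l.sum) {j : ℕ} (hj : Multiset.card l ≤ j) :
    defect PType.C l j = 1 :=
  defect_C_eq_one (by rwa [psum_of_card_le hj])
    (by simp [rowLen_eq_zero ((colLen_le_card l 0).trans hj)])

lemma IsPartition.defect_C_down (hl : IsPartition l) (hs : Odd l.sum) (j : ℕ) :
    defect PType.C (down l) j + (if Multiset.card l ≤ j then 1 else 0) = defect PType.C l j := by
  have h0 := ne_zero_of_odd_sum hs
  have hpsum := hl.psum_down h0 j
  split_ifs at hpsum ⊢ with hj
  · have heven : Even (psum (down l) j) := by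
      rw [psum_of_card_le hj, Nat.odd_iff] at *
      rw [Nat.even_iff]
      omega
    rw [defect_C_eq_zero heven, defect_C_of_card_le hs hj]
  · have hlast (h : j + 1 = Multiset.card l) : psum l j + rowLen l j = l.sum := by
      rw [← psum_succ, psum_of_card_le h.ge]
    have := hl.rowLen_pos_iff (i := j)
    have := rowLen_antitone l (Nat.sub_le j 1)
    have : Odd (psum l j) → 0 < j := fun h => pos_of_odd_shiftedSum (X := PType.C) h
    simp only [defect, shiftedSum_C, badPart_iff, parityShift, hl.rowLen_down h0, add_zero,
      Nat.odd_iff] at *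
    split_ifs <;> omega

-- For odd `|λ|` the partition `(λ⁻)_C` obeys the formula that the collapse of `λ` itself would.
lemma IsPartition.psum_collapse_down_add_defect (hl : IsPartition l) (hs : Odd l.sum) (j : ℕ) :
    psum (collapse PType.C (down l)) j + defect PType.C l j = psum l j := by
  have h0 := ne_zero_of_odd_sum hs
  have := psum_collapse_add_defect (X := PType.C) (hl.even_sum_down hs) j
  have := hl.psum_down h0 j
  have := hl.defect_C_down hs j
  omega

lemma IsPartition.isPartition_collapse_down (hl : IsPartition l) (hs : Odd l.sum) :
    IsPartition (collapse PType.C (down l)) :=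
  isPartition_collapse (X := PType.C) (hl.even_sum_down hs)

lemma IsPartition.even_sum_collapse_down (hl : IsPartition l) (hs : Odd l.sum) :
    Even (collapse PType.C (down l)).sum := by
  rw [sum_collapse (X := PType.C) (hl.even_sum_down hs)]
  exact hl.even_sum_down hs

lemma IsPartition.le_rowLen_collapse_down (hl : IsPartition l) (hs : Odd l.sum) (hk : Even k)
    {p : ℕ} (hp : Multiset.card l = p + 1) (hlast : k ≤ rowLen l p) :
    k ≤ rowLen (collapse PType.C (down l)) p := by
  have hsum : psum l p + rowLen l p = l.sum := by rw [← psum_succ, psum_of_card_le hp.le]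
  have hdefect (h : rowLen l p = k) : defect PType.C l p = 1 := by
    refine defect_C_eq_one ?_ (h ▸ hk)
    rw [← hsum, h] at hs
    exact (Nat.odd_add.1 hs).2 hk
  have := defect_C_of_card_le hs hp.le
  have := hl.psum_collapse_down_add_defect hs p
  have := hl.psum_collapse_down_add_defect hs (p + 1)
  simp only [psum_succ] at *
  omega

lemma IsPartition.rowLen_collapse_down_card (hl : IsPartition l) (hs : Odd l.sum) :
    rowLen (collapse PType.C (down l)) (Multiset.card l) = 0 := by
  have hstep := hl.psum_collapse_down_add_defect hs (Multiset.card l)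
  have hstep' := hl.psum_collapse_down_add_defect hs (Multiset.card l + 1)
  rw [defect_C_of_card_le hs (by omega), psum_of_card_le (l := l) (by omega)] at hstep hstep'
  rw [psum_succ] at hstep'
  omega

lemma IsPartition.card_collapse_down (hl : IsPartition l) (hs : Odd l.sum) (hk : Even k)
    (hpos : 0 < k) (hmin : ∀ a ∈ l, k ≤ a) :
    Multiset.card (collapse PType.C (down l)) = Multiset.card l := by
  obtain ⟨p, hp⟩ := Nat.exists_eq_add_one.2 (Multiset.card_pos.2 (ne_zero_of_odd_sum hs))
  have hrow := hl.le_rowLen_collapse_down hs hk hp ((forall_le_mem_iff hp).1 hmin)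
  have hrow_succ := hl.rowLen_collapse_down_card hs
  have := (hl.isPartition_collapse_down hs).rowLen_pos_iff (i := p)
  have := (hl.isPartition_collapse_down hs).rowLen_pos_iff (i := p + 1)
  rw [hp] at *
  omega

lemma IsPartition.le_of_mem_collapse_down (hl : IsPartition l) (hs : Odd l.sum) (hk : Even k)
    (hmin : ∀ a ∈ l, k ≤ a) : ∀ a ∈ collapse PType.C (down l), k ≤ a := by
  rcases Nat.eq_zero_or_pos k with rfl | hpos
  · simp
  · obtain ⟨p, hp⟩ := Nat.exists_eq_add_one.2 (Multiset.card_pos.2 (ne_zero_of_odd_sum hs))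
    rw [forall_le_mem_iff ((hl.card_collapse_down hs hk hpos hmin).trans hp)]
    exact hl.le_rowLen_collapse_down hs hk hp ((forall_le_mem_iff hp).1 hmin)

end CollapseDown

/-! ### Collapses of unions -/

section CollapseUnion

variable {l m : Ptn} {k : ℕ}

lemma defect_C_add_of_le_card (hs : Odd l.sum) (hk : Even k) (hmin : ∀ a ∈ l, k ≤ a)
    (hmax : ∀ a ∈ m, a ≤ k) {j : ℕ} (hj : j ≤ Multiset.card l) :
    defect PType.C (l + m) j = defect PType.C l j := by
  rcases hj.lt_or_eq with hlt | rfl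
  · rw [defect, defect, shiftedSum_C, shiftedSum_C, psum_add_of_le_card hmin hmax hj,
      rowLen_add_of_lt_card hmin hmax hlt,
      rowLen_add_of_lt_card hmin hmax ((Nat.sub_le j 1).trans_lt hlt)]
  · obtain ⟨p, hp⟩ := Nat.exists_eq_add_one.2 (Multiset.card_pos.2 (ne_zero_of_odd_sum hs))
    have hlast := (forall_le_mem_iff hp).1 hmin
    have hfirst := forall_mem_le_iff.1 hmax
    have hrow := rowLen_add_card_add hmin hmax 0
    have hprev := rowLen_add_of_lt_card hmin hmax (i := p) (by omega)
    rw [defect_C_of_card_le hs le_rfl]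
    refine if_pos ⟨?_, fun ⟨heq, hodd⟩ => ?_⟩
    · rwa [shiftedSum_C, psum_add_of_le_card hmin hmax le_rfl, psum_of_card_le le_rfl]
    · rw [badPart, Nat.odd_iff] at hodd
      rw [Nat.even_iff] at hk
      simp only [hp, Nat.add_sub_cancel, add_zero] at *
      omega

-- Both indicators test the same condition on `m`, once as it stands and once negated.
lemma excess_add_defect_C (hs : Odd l.sum) (hk : Even k) (hmin : ∀ a ∈ l, k ≤ a)
    (hmax : ∀ a ∈ m, a ≤ k) (i : ℕ) :
    excess m i + defect PType.C (l + m) (Multiset.card l + i) = 1 := by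
  cases i with
  | zero => rw [excess_zero, add_zero, defect_C_add_of_le_card hs hk hmin hmax le_rfl,
      defect_C_of_card_le hs le_rfl]
  | succ i =>
    have hprev : Multiset.card l + (i + 1) - 1 = Multiset.card l + i := by omega
    rw [defect, shiftedSum_C, psum_add_card_add hmin hmax, hprev,
      rowLen_add_card_add hmin hmax, rowLen_add_card_add hmin hmax, excess, Nat.add_sub_cancel]
    simp only [badPart, Nat.odd_iff] at *
    split_ifs <;> omega

lemma collapse_down_add_of_pos (hk : Even k) (hpos : 0 < k) (hl : IsPartition l)
    (hsl : Odd l.sum) (hmin : ∀ a ∈ l, k ≤ a) (hm : InP PType.D m) (hsm : Even m.sum)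
    (hmax : ∀ a ∈ m, a ≤ k) :
    collapse PType.C (down (l + m)) =
      collapse PType.C (down l) + transpose (collapse PType.D (transpose m)) := by
  have hlm : IsPartition (l + m) := hl.add hm.1
  have hslm : Odd (l + m).sum := by rw [Multiset.sum_add]; exact hsl.add_even hsm
  have hcard := hl.card_collapse_down hsl hk hpos hmin
  have hmin' := hl.le_of_mem_collapse_down hsl hk hmin
  have hmax' := hm.le_of_mem_transpose_collapse_transpose hsm hk hmax
  refine eq_of_psum_eq (hlm.isPartition_collapse_down hslm)
    ((hl.isPartition_collapse_down hsl).add (isPartition_transpose _)) fun j => ?_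
  have hunion := hlm.psum_collapse_down_add_defect hslm j
  rcases le_total j (Multiset.card l) with hj | hj
  · have hleft := hl.psum_collapse_down_add_defect hsl j
    rw [psum_add_of_le_card hmin hmax hj, defect_C_add_of_le_card hsl hk hmin hmax hj] at hunion
    rw [psum_add_of_le_card hmin' hmax' (hcard ▸ hj)]
    omega
  · obtain ⟨i, rfl⟩ := Nat.exists_eq_add_of_le hj
    have hleft := hl.psum_collapse_down_add_defect hsl (Multiset.card l)
    have hone := excess_add_defect_C hsl hk hmin hmax i
    rw [psum_of_card_le hcard.le, psum_of_card_le le_rfl, defect_C_of_card_le hsl le_rfl] at hleft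
    rw [psum_add_card_add hmin hmax] at hunion
    rw [← hcard, psum_add_card_add hmin' hmax', hm.psum_transpose_collapse_transpose hsm, hcard]
    omega

lemma collapse_down_add (hk : Even k) (hl : IsPartition l) (hsl : Odd l.sum)
    (hmin : ∀ a ∈ l, k ≤ a) (hm : InP PType.D m) (hsm : Even m.sum) (hmax : ∀ a ∈ m, a ≤ k) :
    collapse PType.C (down (l + m)) =
      collapse PType.C (down l) + transpose (collapse PType.D (transpose m)) := by
  rcases Nat.eq_zero_or_pos k with rfl | hpos
  · have hzero : m = 0 := Multiset.eq_zero_of_forall_notMem fun a ha =>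
      (hm.1 a ha).not_ge (hmax a ha)
    subst hzero
    have hempty : transpose (collapse PType.D (transpose 0)) = 0 :=
      Multiset.eq_zero_of_forall_notMem fun a ha => (isPartition_transpose _ a ha).not_ge
        (hm.le_of_mem_transpose_collapse_transpose hsm hk hmax a ha)
    rw [hempty, add_zero, add_zero]
  · exact collapse_down_add_of_pos hk hpos hl hsl hmin hm hsm hmax

lemma psum_transpose_add (l m : Ptn) (j : ℕ) :
    psum (transpose (l + m)) j = psum (transpose l) j + psum (transpose m) j := by
  simp only [psum_transpose, colLen_add, Finset.sum_add_distrib]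

lemma psum_pjoin (hl : IsPartition l) (hm : IsPartition m) (j : ℕ) :
    psum (pjoin l m) j = psum l j + psum m j := by
  rw [pjoin, psum_transpose_add, transpose_transpose hl, transpose_transpose hm]

lemma psum_transpose_of_le (hmin : ∀ a ∈ l, k ≤ a) {j : ℕ} (hj : j ≤ k) :
    psum (transpose l) j = j * Multiset.card l := by
  rw [psum_transpose, Finset.sum_eq_card_nsmul fun a ha => colLen_eq_card fun p hp =>
    (Finset.mem_range.1 ha).trans_le (hj.trans (hmin p hp)), Finset.card_range, smul_eq_mul]

lemma psum_transpose_of_ge (hmax : ∀ a ∈ m, a ≤ k) {j : ℕ} (hj : k ≤ j) :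
    psum (transpose m) j = m.sum := by
  rw [psum_of_colLen_zero_le, sum_transpose]
  rw [colLen_transpose]
  exact (forall_mem_le_iff.1 hmax).trans hj

lemma defect_transpose_add (hk : Even k) (hcard : 0 < k → Odd (Multiset.card l))
    (hmin : ∀ a ∈ l, k ≤ a) (hmax : ∀ a ∈ m, a ≤ k) (hsm : Even m.sum) (j : ℕ) :
    defect PType.C (transpose (l + m)) j =
      defect PType.C (transpose l) j + defect PType.D (transpose m) j := by
  have hlow (h : j ≤ k) : psum (transpose l) j = j * Multiset.card l := psum_transpose_of_le hmin h
  have hhigh (h : k ≤ j) : psum (transpose m) j = m.sum := psum_transpose_of_ge hmax h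
  have hcol_l {a : ℕ} (ha : a < k) : colLen l a = Multiset.card l :=
    colLen_eq_card fun p hp => ha.trans_le (hmin p hp)
  have hcol_m {a : ℕ} (ha : k ≤ a) : colLen m a = 0 :=
    colLen_eq_zero fun p hp => (hmax p hp).trans ha
  simp only [defect, shiftedSum, parityShift, badPart_iff, rowLen_transpose, colLen_add,
    psum_transpose_add, mul_zero, mul_one, add_zero]
  simp only [Nat.odd_iff, Nat.even_iff] at *
  rcases lt_trichotomy j k with hj | rfl | hj
  · have hmul : j * Multiset.card l % 2 = j % 2 := by
      rw [Nat.mul_mod, hcard (by omega), mul_one, Nat.mod_mod]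
    rw [hlow hj.le, hcol_l hj, hcol_l (show j - 1 < k by omega)]
    split_ifs <;> omega
  · have hmul : j * Multiset.card l % 2 = 0 := by rw [Nat.mul_mod, hk, zero_mul, Nat.zero_mod]
    rw [hlow le_rfl, hhigh le_rfl]
    split_ifs <;> omega
  · rw [hhigh hj.le, hcol_m hj.le, hcol_m (show k ≤ j - 1 by omega)]
    split_ifs <;> omega

lemma collapse_transpose_add (hk : Even k) (hcard : 0 < k → Odd (Multiset.card l))
    (hmin : ∀ a ∈ l, k ≤ a) (hmax : ∀ a ∈ m, a ≤ k) (hsl : Even l.sum) (hsm : Even m.sum) :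
    collapse PType.C (transpose (l + m)) =
      pjoin (collapse PType.C (transpose l)) (collapse PType.D (transpose m)) := by
  have hsl' : sumParity PType.C (transpose l).sum := (sum_transpose l).symm ▸ hsl
  have hsm' : sumParity PType.D (transpose m).sum := (sum_transpose m).symm ▸ hsm
  have hslm : sumParity PType.C (transpose (l + m)).sum := by
    rw [sum_transpose, Multiset.sum_add]
    exact hsl.add hsm
  refine collapse_eq_of_psum_add_defect_eq hslm (isPartition_transpose _) fun j => ?_
  rw [psum_pjoin (isPartition_collapse hsl') (isPartition_collapse hsm'), psum_transpose_add,
    defect_transpose_add hk hcard hmin hmax hsm, ← psum_collapse_add_defect hsl',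
    ← psum_collapse_add_defect hsm', add_add_add_comm]

end CollapseUnion

/-! ### Marked partitions -/

section Marked

variable {X : PType} {nu eta nu1 eta1 nu2 eta2 : Ptn}

lemma even_sum_iff_even_card {l : Ptn} (h : ∀ a ∈ l, Odd a) :
    Even l.sum ↔ Even (Multiset.card l) := by
  induction l using Multiset.induction with
  | empty => simp
  | cons x l ih =>
    have hx : ¬Even x := Nat.not_even_iff_odd.2 (h x (Multiset.mem_cons_self x l))
    rw [Multiset.sum_cons, Multiset.card_cons, Nat.even_add, Nat.even_add_one,
      ih fun a ha => h a (Multiset.mem_cons_of_mem ha)]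
    tauto

lemma InP.odd_card {l : Ptn} (h : InP PType.B l) (hs : Odd l.sum) : Odd (Multiset.card l) := by
  have heven := (inP_iff_even_shiftedSum_colLen.1 h).2 0
  rw [h.1.colLen_zero, shiftedSum, psum_of_card_le le_rfl] at heven
  rw [show parityShift PType.B = 1 from rfl, mul_one] at heven
  exact (Nat.even_add'.1 heven).1 hs

lemma InP.add_B_D {l m : Ptn} (hl : InP PType.B l) (hm : InP PType.D m) :
    InP PType.B (l + m) :=
  ⟨hl.1.add hm.1, fun a ha => Multiset.count_add a l m ▸ (hl.2 a ha).add (hm.2 a ha)⟩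

lemma not_markParity_of_badPart {a : ℕ} (h : badPart X a) : ¬markParity X a := by
  cases X <;> simpa [badPart, markParity] using h

lemma IsMarked.inP_unmarked (h : IsMarked X nu eta) : InP X eta := by
  refine ⟨fun a ha => h.1.1 a (Multiset.mem_add.2 (Or.inr ha)), fun a ha => ?_⟩
  have hnot : a ∉ nu := fun hmem => not_markParity_of_badPart ha (h.2.2.1 a hmem).2
  simpa [Multiset.count_eq_zero_of_notMem hnot] using h.1.2 a ha

lemma IsMarked.odd_of_mem (h : IsMarked X nu eta) (hX : X = PType.B ∨ X = PType.D) {a : ℕ}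
    (ha : a ∈ nu) : Odd a := by
  rcases hX with rfl | rfl <;> exact (h.2.2.1 a ha).2

lemma IsMarked.even_sum_marks (h : IsMarked X nu eta) (hX : X = PType.B ∨ X = PType.D) :
    Even nu.sum :=
  (even_sum_iff_even_card fun _ => h.odd_of_mem hX).2 (h.2.2.2 hX)

lemma IsMarked.odd_sum_unmarked (h : IsMarked PType.B nu eta) : Odd eta.sum :=
  (Nat.odd_add'.1 (Multiset.sum_add nu eta ▸ h.2.1)).2 (h.even_sum_marks (Or.inl rfl))

lemma IsMarked.even_sum_unmarked (h : IsMarked PType.D nu eta) : Even eta.sum :=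
  (Nat.even_add.1 (Multiset.sum_add nu eta ▸ h.2.1)).1 (h.even_sum_marks (Or.inr rfl))

lemma IsMarked.add_B_D {k : ℕ} (h1 : IsMarked PType.B nu1 eta1) (h2 : IsMarked PType.D nu2 eta2)
    (hk : Even k) (hmin : ∀ a ∈ nu1 + eta1, k ≤ a) (hmax : ∀ a ∈ nu2 + eta2, a ≤ k) :
    IsMarked PType.B (nu1 + nu2) (eta1 + eta2) := by
  have hodd1 : ∀ a ∈ nu1, Odd a := fun _ => h1.odd_of_mem (Or.inl rfl)
  have hodd2 : ∀ a ∈ nu2, Odd a := fun _ => h2.odd_of_mem (Or.inr rfl)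
  -- A common part would equal `k`, which is even.
  have hdisj : Disjoint nu1 nu2 := Multiset.disjoint_left.2 fun {a} ha1 ha2 => by
    have heq : a = k := le_antisymm (hmax a (Multiset.mem_add.2 (Or.inl ha2)))
      (hmin a (Multiset.mem_add.2 (Or.inl ha1)))
    exact Nat.not_even_iff_odd.2 (hodd1 a ha1) (heq ▸ hk)
  rw [IsMarked, add_add_add_comm, Multiset.sum_add]
  refine ⟨h1.1.add_B_D h2.1, h1.2.1.add_even h2.2.1, fun a ha => ?_, fun _ => ?_⟩
  · rw [Multiset.count_add]
    rcases Multiset.mem_add.1 ha with ha1 | ha2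
    · have hnot := Multiset.disjoint_left.1 hdisj ha1
      rw [(h1.2.2.1 a ha1).1, Multiset.count_eq_zero_of_notMem hnot]
      exact ⟨rfl, hodd1 a ha1⟩
    · have hnot := Multiset.disjoint_right.1 hdisj ha2
      rw [(h2.2.2.1 a ha2).1, Multiset.count_eq_zero_of_notMem hnot]
      exact ⟨rfl, hodd2 a ha2⟩
  · rw [Multiset.card_add]
    exact (h1.2.2.2 (Or.inl rfl)).add (h2.2.2.2 (Or.inr rfl))

lemma IsMarked.even_sum_add_collapse_down (h : IsMarked PType.B nu eta) :
    Even (nu + collapse PType.C (down eta)).sum := by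
  rw [Multiset.sum_add]
  exact (h.even_sum_marks (Or.inl rfl)).add
    (h.inP_unmarked.1.even_sum_collapse_down h.odd_sum_unmarked)

lemma IsMarked.even_sum_add_transpose_collapse_transpose (h : IsMarked PType.D nu eta) :
    Even (nu + transpose (collapse PType.D (transpose eta))).sum := by
  rw [Multiset.sum_add, sum_transpose_collapse_transpose h.even_sum_unmarked]
  exact (h.even_sum_marks (Or.inr rfl)).add h.even_sum_unmarked

lemma IsMarked.odd_card_add_collapse_down {k : ℕ} (h : IsMarked PType.B nu eta) (hk : Even k)
    (hpos : 0 < k) (hmin : ∀ a ∈ eta, k ≤ a) :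
    Odd (Multiset.card (nu + collapse PType.C (down eta))) := by
  rw [Multiset.card_add, h.inP_unmarked.1.card_collapse_down h.odd_sum_unmarked hk hpos hmin,
    ← Multiset.card_add]
  exact h.1.odd_card h.2.1

end Marked

/-- Lemma 4.5 of the paper (for `d_S`): the union of a type-B marked partition and a
type-D marked partition, with the former evenly superior, is a type-B marked partition,
and `d_S` of the union is the join of the `d_S` values. -/
theorem dS_of_B_D_union (nu1 eta1 nu2 eta2 : Ptn)
    (h1 : IsMarked PType.B nu1 eta1) (h2 : IsMarked PType.D nu2 eta2)
    (hsup : EvenlySuperior (nu1 + eta1) (nu2 + eta2)) :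
    IsMarked PType.B (nu1 + nu2) (eta1 + eta2) ∧
    dS PType.B (nu1 + nu2) (eta1 + eta2) =
      pjoin (dS PType.B nu1 eta1) (dS PType.D nu2 eta2) := by
  obtain ⟨k, hk, hmax, hmin⟩ := hsup
  have hmin : ∀ a ∈ nu1 + eta1, k ≤ a := fun a ha => hmin.trans (Nat.sInf_le ha)
  have hmax : ∀ a ∈ nu2 + eta2, a ≤ k := fun a ha => (Multiset.le_sup ha).trans hmax
  refine ⟨h1.add_B_D h2 hk hmin hmax, ?_⟩
  rw [forall_mem_add_iff] at hmin hmax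
  have hmin' := h1.inP_unmarked.1.le_of_mem_collapse_down h1.odd_sum_unmarked hk hmin.2
  have hmax' :=
    h2.inP_unmarked.le_of_mem_transpose_collapse_transpose h2.even_sum_unmarked hk hmax.2
  simp only [dS]
  rw [collapse_down_add hk h1.inP_unmarked.1 h1.odd_sum_unmarked hmin.2 h2.inP_unmarked
    h2.even_sum_unmarked hmax.2, add_add_add_comm]
  exact collapse_transpose_add hk (fun hpos => h1.odd_card_add_collapse_down hk hpos hmin.2)
    (forall_mem_add_iff.2 ⟨hmin.1, hmin'⟩) (forall_mem_add_iff.2 ⟨hmax.1, hmax'⟩)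
    h1.even_sum_add_collapse_down h2.even_sum_add_transpose_collapse_transpose

end NilDual
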